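/- Let A, B be integers and let p be an odd prime with p ∤ B(A² − 4B), and suppose the Legendre symbol (B/p) = 1 with b an integer satisfying b² ≡ B (mod p). If ((A²−4B)/p) = 1, then p divides u_{(p−1)/2}(A,B) and u_{(p+1)/2}(A,B) ≡ ((A−2b)/p) (mod p); if ((A²−4B)/p) = −1, then b·u_{(p−1)/2}(A,B) ≡ ((A−2b)/p) (mod p) and p divides u_{(p+1)/2}(A,B). Here ((A−2b)/p) denotes the Legendre symbol. -/

import Mathlib

/-- The Lucas sequence `u_n(A,B)`. -/
def lucasU (A B : ℤ) : ℕ → ℤ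
  | 0 => 0
  | 1 => 1
  | n + 2 => A * lucasU A B (n + 1) - B * lucasU A B n

/-!
Write `B = b²` and, over an algebraic closure, `A = α² + β²` and `b = αβ`, so that
`A + 2b = (α + β)²` and `A - 2b = (α - β)²`. If `q = 2h + 1` is a power of the characteristic, then
`(α ± β)^q = α^q ± β^q` turns Binet's formula for `u_h` and `u_{h+1}` into
`2b u_h = (A - 2b)^h - (A + 2b)^h` and `2 u_{h+1} = (A - 2b)^h + (A + 2b)^h`.
Over the field with `q` elements the right-hand sides are the difference and the sum of the
quadratic characters of `A - 2b` and `A + 2b`, and the product of these two characters is the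
quadratic character of `A² - 4B`.
-/

/-- The Lucas sequence `u_n(A, B)` with parameters in an arbitrary commutative ring, needed because
the argument takes place in extensions of the residue field. -/
def lucasSeq {R : Type*} [CommRing R] (A B : R) : ℕ → R
  | 0 => 0
  | 1 => 1
  | n + 2 => A * lucasSeq A B (n + 1) - B * lucasSeq A B n

section CommRing

variable {R S : Type*} [CommRing R] [CommRing S]

theorem map_lucasSeq (f : R →+* S) (A B : R) (n : ℕ) :
    f (lucasSeq A B n) = lucasSeq (f A) (f B) n := by
  induction n using Nat.twoStepInduction with
  | zero => simp only [lucasSeq, map_zero]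
  | one => simp only [lucasSeq, map_one]
  | more n ih₀ ih₁ => simp only [lucasSeq, map_sub, map_mul, ih₀, ih₁]

theorem lucasU_eq_lucasSeq (A B : ℤ) (n : ℕ) : lucasU A B n = lucasSeq A B n := by
  induction n using Nat.twoStepInduction with
  | zero => rfl
  | one => rfl
  | more n ih₀ ih₁ => simp only [lucasU, lucasSeq, ih₀, ih₁]

theorem intCast_lucasU (A B : ℤ) (n : ℕ) : (lucasU A B n : R) = lucasSeq (A : R) (B : R) n := by
  rw [lucasU_eq_lucasSeq]
  exact map_lucasSeq (Int.castRingHom R) A B n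

theorem sub_mul_lucasSeq_add_mul (x y : R) (n : ℕ) :
    (x - y) * lucasSeq (x + y) (x * y) n = x ^ n - y ^ n := by
  induction n using Nat.twoStepInduction with
  | zero => simp [lucasSeq]
  | one => simp [lucasSeq]
  | more n ih₀ ih₁ =>
    rw [lucasSeq]
    linear_combination (x + y) * ih₁ - x * y * ih₀

theorem sq_sub_sq_mul_two_mul_lucasSeq_half (p : ℕ) [ExpChar R p] {k h : ℕ}
    (hq : p ^ k = 2 * h + 1) (α β : R) :
    (α ^ 2 - β ^ 2) * (2 * (α * β) * lucasSeq (α ^ 2 + β ^ 2) (α ^ 2 * β ^ 2) h) =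
      (α ^ 2 - β ^ 2) * (((α - β) ^ 2) ^ h - ((α + β) ^ 2) ^ h) := by
  have binet := sub_mul_lucasSeq_add_mul (α ^ 2) (β ^ 2) h
  have frobenius_add := add_pow_expChar_pow α β p k
  have frobenius_sub := sub_pow_expChar_pow (p := p) (n := k) α β
  simp only [hq, pow_succ _ (2 * h), pow_mul] at frobenius_add frobenius_sub
  linear_combination
    2 * (α * β) * binet - (α + β) * frobenius_sub + (α - β) * frobenius_add

theorem sq_sub_sq_mul_two_mul_lucasSeq_half_succ (p : ℕ) [ExpChar R p] {k h : ℕ}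
    (hq : p ^ k = 2 * h + 1) (α β : R) :
    (α ^ 2 - β ^ 2) * (2 * lucasSeq (α ^ 2 + β ^ 2) (α ^ 2 * β ^ 2) (h + 1)) =
      (α ^ 2 - β ^ 2) * (((α - β) ^ 2) ^ h + ((α + β) ^ 2) ^ h) := by
  have binet := sub_mul_lucasSeq_add_mul (α ^ 2) (β ^ 2) (h + 1)
  have frobenius_add := add_pow_expChar_pow α β p k
  have frobenius_sub := sub_pow_expChar_pow (p := p) (n := k) α β
  simp only [hq, pow_succ _ (2 * h), pow_mul] at frobenius_add frobenius_sub
  linear_combination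
    2 * binet - (α + β) * frobenius_sub - (α - β) * frobenius_add

end CommRing

theorem exists_sq_add_sq_eq_and_mul_eq {K : Type*} [Field K] [IsSepClosed K] [NeZero (2 : K)]
    (a b : K) : ∃ α β : K, α ^ 2 + β ^ 2 = a ∧ α * β = b := by
  obtain ⟨s, hs⟩ := IsSepClosed.exists_eq_mul_self (a + 2 * b)
  obtain ⟨t, ht⟩ := IsSepClosed.exists_eq_mul_self (a - 2 * b)
  have h2 : (2 : K) ≠ 0 := two_ne_zero
  refine ⟨(s + t) / 2, (s - t) / 2, ?_, ?_⟩
  · field_simp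
    linear_combination -2 * hs - 2 * ht
  · field_simp
    linear_combination ht - hs

theorem two_mul_lucasSeq_half_eq_pow {K : Type*} [Field K] [NeZero (2 : K)] (p : ℕ) [ExpChar K p]
    {k h : ℕ} (hq : p ^ k = 2 * h + 1) {A b : K} (hD : A ^ 2 - 4 * b ^ 2 ≠ 0) :
    2 * b * lucasSeq A (b ^ 2) h = (A - 2 * b) ^ h - (A + 2 * b) ^ h ∧
      2 * lucasSeq A (b ^ 2) (h + 1) = (A - 2 * b) ^ h + (A + 2 * b) ^ h := by
  let i := algebraMap K (AlgebraicClosure K)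
  have : NeZero (2 : AlgebraicClosure K) :=
    ⟨by simpa only [map_ofNat] using (map_ne_zero i).mpr (two_ne_zero' K)⟩
  have : ExpChar (AlgebraicClosure K) p := expChar_of_injective_algebraMap i.injective p
  obtain ⟨α, β, hA, hb⟩ := exists_sq_add_sq_eq_and_mul_eq (i A) (i b)
  have hB : i (b ^ 2) = α ^ 2 * β ^ 2 := by rw [map_pow, ← hb, mul_pow]
  have hsub : i (A - 2 * b) = (α - β) ^ 2 := by
    rw [map_sub, map_mul, map_ofNat, ← hA, ← hb]; ring
  have hadd : i (A + 2 * b) = (α + β) ^ 2 := by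
    rw [map_add, map_mul, map_ofNat, ← hA, ← hb]; ring
  have hαβ : α ^ 2 - β ^ 2 ≠ 0 := by
    refine ne_zero_pow two_ne_zero (?_ : (α ^ 2 - β ^ 2) ^ 2 ≠ 0)
    have : i (A ^ 2 - 4 * b ^ 2) = (α ^ 2 - β ^ 2) ^ 2 := by
      rw [show A ^ 2 - 4 * b ^ 2 = (A - 2 * b) * (A + 2 * b) by ring, map_mul, hsub, hadd]; ring
    rw [← this]
    exact (map_ne_zero i).mpr hD
  constructor <;> apply i.injective
  · simpa only [map_mul, map_sub, map_pow, map_ofNat, map_lucasSeq, hA, hB, hb, hsub, hadd] using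
      mul_left_cancel₀ hαβ (sq_sub_sq_mul_two_mul_lucasSeq_half p hq α β)
  · simpa only [map_mul, map_add, map_pow, map_ofNat, map_lucasSeq, hA, hB, hsub, hadd] using
      mul_left_cancel₀ hαβ (sq_sub_sq_mul_two_mul_lucasSeq_half_succ p hq α β)

section FiniteField

variable {F : Type*} [Field F] [Fintype F] [DecidableEq F]

theorem two_mul_lucasSeq_half_eq_quadraticChar (hF : ringChar F ≠ 2) {A b : F}
    (hD : A ^ 2 - 4 * b ^ 2 ≠ 0) :
    2 * b * lucasSeq A (b ^ 2) ((Fintype.card F - 1) / 2) =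
        quadraticChar F (A - 2 * b) - quadraticChar F (A + 2 * b) ∧
      2 * lucasSeq A (b ^ 2) ((Fintype.card F + 1) / 2) =
        quadraticChar F (A - 2 * b) + quadraticChar F (A + 2 * b) := by
  obtain ⟨p, _, k, hp, hcard⟩ := FiniteField.card' F
  have : Fact p.Prime := ⟨hp⟩
  have : NeZero (2 : F) := ⟨Ring.two_ne_zero hF⟩
  have hodd := FiniteField.odd_card_of_char_ne_two hF
  have hq : p ^ (k : ℕ) = 2 * (Fintype.card F / 2) + 1 := by omega
  have h_sub : (Fintype.card F - 1) / 2 = Fintype.card F / 2 := by omega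
  have h_add : (Fintype.card F + 1) / 2 = Fintype.card F / 2 + 1 := by omega
  simpa only [h_sub, h_add, quadraticChar_eq_pow_of_char_ne_two' hF] using
    two_mul_lucasSeq_half_eq_pow p hq hD

theorem stmt15_general (hF : ringChar F ≠ 2) {A B b : F} (hB : B ≠ 0) (hb : b ^ 2 = B) :
    (quadraticChar F (A ^ 2 - 4 * B) = 1 →
      lucasSeq A B ((Fintype.card F - 1) / 2) = 0 ∧
        lucasSeq A B ((Fintype.card F + 1) / 2) = quadraticChar F (A - 2 * b)) ∧
    (quadraticChar F (A ^ 2 - 4 * B) = -1 →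
      b * lucasSeq A B ((Fintype.card F - 1) / 2) = quadraticChar F (A - 2 * b) ∧
        lucasSeq A B ((Fintype.card F + 1) / 2) = 0) := by
  subst hb
  have hb0 : b ≠ 0 := ne_zero_pow two_ne_zero hB
  have h2 : (2 : F) ≠ 0 := Ring.two_ne_zero hF
  have hχ : quadraticChar F (A ^ 2 - 4 * b ^ 2) =
      quadraticChar F (A - 2 * b) * quadraticChar F (A + 2 * b) := by
    rw [← map_mul]; ring_nf
  have hD : quadraticChar F (A ^ 2 - 4 * b ^ 2) ≠ 0 → A ^ 2 - 4 * b ^ 2 ≠ 0 :=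
    quadraticChar_eq_zero_iff.not.mp
  constructor <;> intro h
  · obtain ⟨h_half, h_succ⟩ :=
      two_mul_lucasSeq_half_eq_quadraticChar hF (hD (h ▸ one_ne_zero))
    have heq : quadraticChar F (A - 2 * b) = quadraticChar F (A + 2 * b) :=
      Int.eq_of_mul_eq_one (hχ ▸ h)
    rw [← heq] at h_half h_succ
    constructor
    · apply mul_left_cancel₀ (mul_ne_zero h2 hb0)
      linear_combination h_half
    · apply mul_left_cancel₀ h2
      linear_combination h_succ
  · obtain ⟨h_half, h_succ⟩ :=
      two_mul_lucasSeq_half_eq_quadraticChar hF (hD (h ▸ neg_ne_zero.mpr one_ne_zero))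
    have hneg : quadraticChar F (A + 2 * b) = -quadraticChar F (A - 2 * b) := by
      refine neg_eq_iff_eq_neg.mp (Int.eq_of_mul_eq_one ?_).symm
      rw [mul_neg, ← hχ, h, neg_neg]
    rw [hneg, Int.cast_neg] at h_half h_succ
    constructor
    · apply mul_left_cancel₀ h2
      linear_combination h_half
    · apply mul_left_cancel₀ h2
      linear_combination h_succ

end FiniteField

theorem stmt15 (p : ℕ) [Fact p.Prime] (hodd : Odd p) (A B b : ℤ)
    (hpB : ¬ ((p : ℤ) ∣ B * (A ^ 2 - 4 * B)))
    (hB : legendreSym p B = 1) (hb : b ^ 2 ≡ B [ZMOD p]) :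
    (legendreSym p (A ^ 2 - 4 * B) = 1 →
      ((p : ℤ) ∣ lucasU A B ((p - 1) / 2) ∧
        lucasU A B ((p + 1) / 2) ≡ legendreSym p (A - 2 * b) [ZMOD p])) ∧
    (legendreSym p (A ^ 2 - 4 * B) = -1 →
      (b * lucasU A B ((p - 1) / 2) ≡ legendreSym p (A - 2 * b) [ZMOD p] ∧
        (p : ℤ) ∣ lucasU A B ((p + 1) / 2))) := by
  have hp2 : ringChar (ZMod p) ≠ 2 :=
    (ZMod.ringChar_zmod_n p).trans_ne (hodd.ne_two_of_dvd_nat dvd_rfl)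
  have hB0 : (B : ZMod p) ≠ 0 := mt (legendreSym.eq_zero_iff p B).mpr (hB ▸ one_ne_zero)
  have hb' : (b : ZMod p) ^ 2 = B := by exact_mod_cast (ZMod.intCast_eq_intCast_iff _ _ p).mpr hb
  simpa [← ZMod.intCast_eq_intCast_iff, ← ZMod.intCast_zmod_eq_zero_iff_dvd, intCast_lucasU,
    legendreSym] using stmt15_general (A := A) hp2 hB0 hb'
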